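/- Let G be a finite group with all characters rational-valued, and let H, K be subgroups of G. Then Σ_{j=1}^{N} (dim ρ_j^H)(dim ρ_j^K) = (1/(|H||K|)) · Σ over pairs (h, k) ∈ H × K with h conjugate to k of |G|/c(h), where c(h) is the size of the conjugacy class of h, N is the number of irreducible representations, and ρ_j^H is the H-fixed subspace of ρ_j. -/

import Mathlib

open scoped Classical

/-!
The dimension of `V^H` is the average of the character of `V` over `H`. Multiplying the averages
over `H` and `K` and summing over the irreducible representations, the identity becomes column
orthogonality `∑ᵢ χᵢ(g) χᵢ(h⁻¹) = [g ∼ h] |G| / c(g)`.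

Column orthogonality follows from row orthogonality once every class function orthogonal to all
irreducible characters is known to vanish. Such a function is a central element of the group
algebra. By Schur's lemma it acts by a scalar on each irreducible representation, and this scalar
is zero because its trace is; an element of a semisimple algebra that kills every simple module is
zero.
-/

open scoped MonoidAlgebra
open CategoryTheory Representation
open Module (finrank)

universe u

theorem eq_zero_of_forall_isSimpleModule_smul_eq_zero (k : Type*) {A : Type u} [CommRing k]
    [Ring A] [Algebra k A] [IsSemisimpleRing A] {a : A}
    (h : ∀ (M : Type u) [AddCommGroup M] [Module k M] [Module A M] [IsScalarTower k A M]
      [IsSimpleModule A M] (m : M), a • m = 0) : a = 0 := by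
  suffices a ∈ Ring.jacobson A by simpa [IsSemisimpleModule.jacobson_eq_bot] using this
  refine Submodule.mem_sInf.mpr fun I (hI : IsCoatom I) => ?_
  have : IsSimpleModule A (A ⧸ I) := isSimpleModule_iff_isCoatom.mpr hI
  simpa [← Submodule.Quotient.mk_smul] using h (A ⧸ I) (Submodule.Quotient.mk 1)

section GroupAlgebra

variable {k G V M : Type*}

theorem mem_center_of_coeff_conj [CommSemiring k] [Group G] {z : k[G]}
    (hz : ∀ x y, z.coeff (y * x * y⁻¹) = z.coeff x) : z ∈ Submonoid.center k[G] := by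
  refine Submonoid.mem_center_iff.mpr fun a => ?_
  induction a using MonoidAlgebra.induction_linear with
  | zero => simp
  | add a b ha hb => rw [add_mul, mul_add, ha, hb]
  | single g r =>
    ext x
    have hcoeff : z.coeff (x * g⁻¹) = z.coeff (g⁻¹ * x) := by simpa using hz (g⁻¹ * x) g
    simp [hcoeff, mul_comm]

theorem trace_asAlgebraHom [Field k] [Monoid G] [Fintype G] [AddCommGroup V] [Module k V]
    (σ : Representation k G V) (z : k[G]) :
    LinearMap.trace k V (σ.asAlgebraHom z) = ∑ x, z.coeff x * σ.character x := by
  simp [asAlgebraHom_def, MonoidAlgebra.lift_apply, Finsupp.sum_fintype, character]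

theorem asAlgebraHom_eq_zero_of_trace_eq_zero [Field k] [IsAlgClosed k] [CharZero k] [Monoid G]
    [AddCommGroup V] [Module k V] [FiniteDimensional k V] (σ : Representation k G V)
    [σ.IsIrreducible] {z : k[G]} (hz : z ∈ Submonoid.center k[G])
    (htrace : LinearMap.trace k V (σ.asAlgebraHom z) = 0) : σ.asAlgebraHom z = 0 := by
  obtain ⟨c, hc⟩ := IsIrreducible.algebraMap_intertwiningMap_bijective_of_isAlgClosed.2
    (IntertwiningMap.centralAlgebraMul σ hz)
  have hscalar : σ.asAlgebraHom z = c • LinearMap.id :=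
    congrArg IntertwiningMap.toLinearMap hc.symm
  have : Nontrivial V := IsSimpleModule.nontrivial k[G] σ.asModule
  have hdim : (finrank k V : k) ≠ 0 := Nat.cast_ne_zero.mpr Module.finrank_pos.ne'
  have hc_zero : c = 0 := by simpa [hscalar, hdim] using htrace
  rw [hscalar, hc_zero, zero_smul]

theorem asAlgebraHom_ofModule' [CommSemiring k] [Monoid G] [AddCommMonoid M] [Module k M]
    [Module k[G] M] [IsScalarTower k k[G] M] :
    (ofModule' (k := k) (G := G) M).asAlgebraHom = Algebra.lsmul k k M :=
  (MonoidAlgebra.lift k (M →ₗ[k] M) G).apply_symm_apply _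

theorem isIrreducible_ofModule' [Field k] [Monoid G] [AddCommGroup M] [Module k M]
    [Module k[G] M] [IsScalarTower k k[G] M] [IsSimpleModule k[G] M] :
    (ofModule' (k := k) (G := G) M).IsIrreducible := by
  rw [irreducible_iff_isSimpleModule_asModule]
  let e : (ofModule' (k := k) (G := G) M).asModule ≃ₗ[k[G]] M :=
    { (asModuleEquiv _).toAddEquiv with
      map_smul' a m := congr($asAlgebraHom_ofModule' a (asModuleEquiv _ m)) }
  exact .congr e

end GroupAlgebra

theorem simple_of_isIrreducible {k G V : Type u} [Field k] [IsAlgClosed k] [Group G] [Finite G]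
    [NeZero (Nat.card G : k)] [AddCommGroup V] [Module k V] [FiniteDimensional k V]
    (σ : Representation k G V) [σ.IsIrreducible] : Simple (FDRep.of σ) := by
  have := Fintype.ofFinite G
  have := invertibleOfNonzero (NeZero.ne (Nat.card G : k))
  rw [FDRep.simple_iff_end_is_rank_one]
  calc
    finrank k (FDRep.of σ ⟶ FDRep.of σ) = finrank k (linHom σ σ).invariants :=
      (linHom.invariantsEquivFDRepHom (FDRep.of σ) (FDRep.of σ)).finrank_eq.symm
    _ = finrank k (IntertwiningMap σ σ) := (invariantsEquivIntertwiningMap σ σ).finrank_eq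
    _ = 1 := IsIrreducible.finrank_intertwiningMap_self σ

section Character

variable {k G : Type u} [Field k] [Group G]

theorem character_eq_of_isConj (V : FDRep k G) {g h : G} (hgh : IsConj g h) :
    V.character g = V.character h := by
  obtain ⟨c, rfl⟩ := isConj_iff.mp hgh
  exact (V.char_conj g c).symm

theorem sum_ite_isConj_mul_character [Fintype G] (V : FDRep k G) (g : G) :
    ∑ x, (if IsConj g x then 1 else 0) * V.character x =
      Nat.card (conjugatesOf g) * V.character g := by
  have hconst : ∀ x ∈ Finset.univ.filter (IsConj g), V.character x = V.character g :=
    fun x hx => (character_eq_of_isConj V (Finset.mem_filter.mp hx).2).symm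
  have hcard : (Finset.univ.filter (IsConj g)).card = Nat.card (conjugatesOf g) :=
    (Nat.subtype_card _ fun x => Finset.mem_filter_univ x).symm
  simp_rw [ite_mul, one_mul, zero_mul, ← Finset.sum_filter, Finset.sum_congr rfl hconst,
    Finset.sum_const, nsmul_eq_mul, hcard]

theorem finrank_invariants_comp_subtype (V : FDRep k G) (H : Subgroup G) [Fintype H]
    [NeZero (Nat.card H : k)] :
    (finrank k (invariants (V.ρ.comp H.subtype)) : k) =
      (Nat.card H : k)⁻¹ * ∑ h : H, V.character h := by
  have := invertibleOfNonzero (NeZero.ne (Nat.card H : k))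
  exact (card_inv_mul_sum_char_eq_finrank (V.ρ.comp H.subtype)).symm

end Character

section Orthogonality

variable {k G : Type u} [Field k] [IsAlgClosed k] [Group G] [Fintype G]
  {ι : Type*} {ρ : ι → FDRep k G}

theorem sum_character_mul_character_inv [NeZero (Nat.card G : k)] (hirr : ∀ i, Simple (ρ i))
    (hdist : ∀ i j, Nonempty (ρ i ≅ ρ j) → i = j) (i j : ι) :
    ∑ x, (ρ i).character x * (ρ j).character x⁻¹ = if i = j then (Nat.card G : k) else 0 := by
  have := hirr i
  have := hirr j
  have hG : (Nat.card G : k) ≠ 0 := NeZero.ne _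
  have := invertibleOfNonzero hG
  have hiso : Nonempty (ρ i ≅ ρ j) ↔ i = j := ⟨hdist i j, fun h => h ▸ ⟨Iso.refl _⟩⟩
  have horth := FDRep.char_orthonormal (ρ i) (ρ j)
  rw [inv_mul_eq_iff_eq_mul₀ hG] at horth
  simpa [hiso] using horth

theorem eq_zero_of_forall_sum_mul_character_eq_zero [CharZero k]
    (hcomplete : ∀ V : FDRep k G, Simple V → ∃ i, Nonempty (ρ i ≅ V)) {f : G → k}
    (hf : ∀ x y, f (y * x * y⁻¹) = f x) (horth : ∀ i, ∑ x, f x * (ρ i).character x = 0) :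
    f = 0 := by
  let z : k[G] := .ofCoeff (Finsupp.equivFunOnFinite.symm f)
  suffices z = 0 from congrArg (fun z : k[G] => ⇑z.coeff) this
  have hz : z ∈ Submonoid.center k[G] := mem_center_of_coeff_conj hf
  refine eq_zero_of_forall_isSimpleModule_smul_eq_zero k fun M _ _ _ _ _ m => ?_
  have : FiniteDimensional k M := Module.Finite.trans k[G] M
  have : (ofModule' (k := k) (G := G) M).IsIrreducible := isIrreducible_ofModule'
  obtain ⟨i, ⟨e⟩⟩ := hcomplete _ (simple_of_isIrreducible (ofModule' M))
  have htrace : LinearMap.trace k M ((ofModule' M).asAlgebraHom z) = 0 := by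
    rw [trace_asAlgebraHom, ← horth i, FDRep.char_iso e]
    rfl
  have hzero := asAlgebraHom_eq_zero_of_trace_eq_zero _ hz htrace
  rw [asAlgebraHom_ofModule'] at hzero
  exact congr($hzero m)

theorem sum_irreducible_character_mul_character_inv [CharZero k] [Fintype ι]
    (hirr : ∀ i, Simple (ρ i)) (hdist : ∀ i j, Nonempty (ρ i ≅ ρ j) → i = j)
    (hcomplete : ∀ V : FDRep k G, Simple V → ∃ i, Nonempty (ρ i ≅ V)) (g h : G) :
    ∑ i, (ρ i).character g * (ρ i).character h⁻¹ =
      if IsConj g h then (Nat.card G : k) / Nat.card (conjugatesOf g) else 0 := by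
  let f : G → k := fun x => Nat.card G * (if IsConj g x then 1 else 0) -
    Nat.card (conjugatesOf g) * ∑ i, (ρ i).character g * (ρ i).character x⁻¹
  have hclass : ∀ x y, f (y * x * y⁻¹) = f x := fun x y => by
    have hxy : IsConj x (y * x * y⁻¹) := isConj_iff.mpr ⟨y, rfl⟩
    have hinv : (y * x * y⁻¹)⁻¹ = y * x⁻¹ * y⁻¹ := by group
    have hiff : IsConj g (y * x * y⁻¹) ↔ IsConj g x :=
      ⟨fun h => h.trans hxy.symm, fun h => h.trans hxy⟩
    simp only [f, hiff, hinv, FDRep.char_conj]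
  have horth : ∀ j, ∑ x, f x * (ρ j).character x = 0 := fun j => by
    have hproj : ∑ x, (∑ i, (ρ i).character g * (ρ i).character x⁻¹) * (ρ j).character x =
        Nat.card G * (ρ j).character g := by
      simp_rw [Finset.sum_mul, mul_assoc]
      rw [Finset.sum_comm]
      simp_rw [← Finset.mul_sum, mul_comm _ ((ρ j).character _),
        sum_character_mul_character_inv hirr hdist]
      simp
    simp_rw [f, sub_mul, Finset.sum_sub_distrib, mul_assoc, ← Finset.mul_sum, hproj,
      sum_ite_isConj_mul_character]
    ring
  have hfh : f h = 0 :=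
    congrFun (eq_zero_of_forall_sum_mul_character_eq_zero hcomplete hclass horth) h
  have hcard : (Nat.card (conjugatesOf g) : k) ≠ 0 := by
    have : Nonempty (conjugatesOf g) := ⟨g, mem_conjugatesOf_self⟩
    exact Nat.cast_ne_zero.mpr Nat.card_pos.ne'
  rw [eq_div_of_mul_eq hcard ((mul_comm _ _).trans (sub_eq_zero.mp hfh).symm), mul_ite, mul_one,
    mul_zero, ite_div, zero_div]

end Orthogonality

theorem sum_finrank_invariants_mul_eq_conjugate_pair_sum_general
    {k G : Type u} [Field k] [IsAlgClosed k] [CharZero k] [Group G] [Fintype G]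
    {ι : Type*} [Fintype ι] (ρ : ι → FDRep k G) (hirr : ∀ i, Simple (ρ i))
    (hdist : ∀ i j, Nonempty (ρ i ≅ ρ j) → i = j)
    (hcomplete : ∀ V : FDRep k G, Simple V → ∃ i, Nonempty (ρ i ≅ V)) (H K : Subgroup G) :
    ∑ i, (finrank k (invariants ((ρ i).ρ.comp H.subtype)) : ℚ) *
        (finrank k (invariants ((ρ i).ρ.comp K.subtype)) : ℚ) =
      ((Nat.card H : ℚ) * (Nat.card K : ℚ))⁻¹ * ∑ h : H, ∑ x : K,
        if IsConj (h : G) (x : G) then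
          (Fintype.card G : ℚ) / (Nat.card {b : G // IsConj (h : G) b} : ℚ)
        else 0 := by
  have hsum_inv : ∀ i, ∑ x : K, (ρ i).character x = ∑ x : K, (ρ i).character (x : G)⁻¹ :=
    fun i => (Fintype.sum_equiv (Equiv.inv K) _ _ fun _ => rfl).symm
  have hcol := sum_irreducible_character_mul_character_inv hirr hdist hcomplete
  apply Rat.cast_injective (α := k)
  push_cast [apply_ite ((↑) : ℚ → k), ← Nat.card_eq_fintype_card]
  calc
    _ = ∑ i, ((Nat.card H : k) * Nat.card K)⁻¹ *
          ((∑ h : H, (ρ i).character h) * ∑ x : K, (ρ i).character (x : G)⁻¹) := by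
      simp_rw [finrank_invariants_comp_subtype, hsum_inv, mul_inv, mul_mul_mul_comm]
    _ = ((Nat.card H : k) * Nat.card K)⁻¹ *
          ∑ h : H, ∑ x : K, ∑ i, (ρ i).character h * (ρ i).character (x : G)⁻¹ := by
      simp_rw [← Finset.mul_sum, Finset.sum_mul_sum]
      rw [Finset.sum_comm]
      simp_rw [Finset.sum_comm (γ := ι)]
    _ = _ := by
      simp_rw [hcol]
      rfl

/-- For a finite group `G` with all characters rational-valued and subgroups
`H, K ≤ G`, `Σⱼ (dim ρⱼ^H)(dim ρⱼ^K)` equals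
`(1/(|H||K|)) ⬝ Σ_{(h,k) ∈ H × K, h ∼ k} |G|/c(h)`. -/
theorem sum_finrank_invariants_mul_eq_conjugate_pair_sum
    {G : Type} [Group G] [Fintype G]
    {ι : Type} [Fintype ι] (ρ : ι → FDRep ℂ G)
    (hirr : ∀ i, CategoryTheory.Simple (ρ i))
    (hdist : ∀ i j, Nonempty (ρ i ≅ ρ j) → i = j)
    (hcomplete : ∀ V : FDRep ℂ G, CategoryTheory.Simple V → ∃ i, Nonempty (ρ i ≅ V))
    (hrat : ∀ (V : FDRep ℂ G) (g : G), ∃ q : ℚ, V.character g = (q : ℂ))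
    (H K : Subgroup G) :
    ∑ i, (Module.finrank ℂ
          (Representation.invariants ((ρ i).ρ.comp H.subtype)) : ℚ)
        * (Module.finrank ℂ
          (Representation.invariants ((ρ i).ρ.comp K.subtype)) : ℚ)
      = ((Nat.card H : ℚ) * (Nat.card K : ℚ))⁻¹ *
          ∑ h : H, ∑ k : K,
            if IsConj (h : G) (k : G) then
              (Fintype.card G : ℚ) / (Nat.card {b : G // IsConj (h : G) b} : ℚ)
            else 0 :=
  sum_finrank_invariants_mul_eq_conjugate_pair_sum_general ρ hirr hdist hcomplete H K
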